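/- Let U ⊂ ℝ³ be open and let μ, γ ∈ C²(U) be nonvanishing with chosen logarithms α = log γ, β = log μ and κ = ω(γμ)^{1/2}. For any C¹ 8-vector field Y on U the conjugation identity P̃(D)( diag(μ^{-1/2} I₄, γ^{-1/2} I₄) Y ) = diag(γ^{-1/2} I₄, μ^{-1/2} I₄) [ P̃(D) − (1/2) P̃(Dβ, Dα) ] Y holds, and consequently, with Y = diag(μ^{1/2} I₄, γ^{1/2} I₄) X, one has (P̃(D) + V_{μ,γ}) X = diag(γ^{-1/2} I₄, μ^{-1/2} I₄)(P̃(D) + W_{μ,γ}) Y; in particular (P̃(D) + V_{μ,γ}) X = 0 in U if and only if (P̃(D) + W_{μ,γ}) Y = 0 in U. -/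

import Mathlib

/-!
The two operators satisfy a Leibniz rule `P±(D)(f u) = f P±(D) u + P±(Df) u` for scalar `f`
(`PplusD_smul`, `PminusD_smul`), and a square root `s` of `exp b` satisfies `Ds = (1/2) s Db`
(`Dg_of_sq_eq_exp`). Taking `f` to be `μ^{-1/2}` and `γ^{-1/2}`, which are square roots of
`exp (-β)` and `exp (-α)`, gives the conjugation identity. Taking `f` to be `μ^{1/2}` and `γ^{1/2}`
instead, the Leibniz terms are exactly the part `(1/2) P̃(Dβ, Dα)` in which `V` differs from
`W`, while the diagonal parts match because `γ^{-1/2} κ μ^{1/2} = ω μ` and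
`μ^{-1/2} κ γ^{1/2} = ω γ`. The two systems are equivalent because the block factors
`γ^{-1/2}`, `μ^{-1/2}` do not vanish.
-/

/- STATEMENT 15: rescaling of the augmented Maxwell system to the potential form
(Section 1 of Caro-Ola-Salo). -/


noncomputable section

open Set Filter Topology MeasureTheory Bornology Metric

/-- Points of `ℝ³`. -/
abbrev V3 : Type := Fin 3 → ℝ
/-- Values of complex vector fields on `ℝ³`. -/
abbrev CV3 : Type := Fin 3 → ℂ
/-- 4-vectors `(φ, vᵗ)ᵗ`. -/
abbrev C4 : Type := Fin 4 → ℂ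
/-- 8-vectors, written in the two 4-blocks `(Φ, Hᵗ)ᵗ` and `(Ψ, Eᵗ)ᵗ`. -/
abbrev C8 : Type := C4 × C4

/-- Partial derivative of a complex valued function on `ℝ³`. -/
def pd (i : Fin 3) (f : V3 → ℂ) (x : V3) : ℂ := fderiv ℝ f x (Pi.single i 1)

/-- Bilinear dot product on `ℂ³`. -/
def dotC (a b : CV3) : ℂ := ∑ i, a i * b i

/-- Cross product on `ℂ³`. -/
def crossC (a b : CV3) : CV3 :=
  ![a 1 * b 2 - a 2 * b 1, a 2 * b 0 - a 0 * b 2, a 0 * b 1 - a 1 * b 0]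

/-- Complexification of a real vector. -/
def cplx (v : V3) : CV3 := fun i => (v i : ℂ)

/-- Build a 4-vector from its scalar and vector parts. -/
def mk4 (f : ℂ) (v : CV3) : C4 := ![f, v 0, v 1, v 2]

/-- The vector part of a 4-vector. -/
def vec4 (u : C4) : CV3 := ![u 1, u 2, u 3]

/-- `P₊(a)(φ,v) = (a·v, φa + a∧v)`. -/
def Pplus (a : CV3) (u : C4) : C4 :=
  mk4 (dotC a (vec4 u)) (fun i => u 0 * a i + crossC a (vec4 u) i)

/-- `P₋(a)(φ,v) = (a·v, φa - a∧v)`. -/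
def Pminus (a : CV3) (u : C4) : C4 :=
  mk4 (dotC a (vec4 u)) (fun i => u 0 * a i - crossC a (vec4 u) i)

/-- The 8×8 block matrix `P̃(a,b) = [[0, P₋(b)], [P₊(a), 0]]`. -/
def Ptilde (a b : CV3) (X : C8) : C8 := (Pminus b X.2, Pplus a X.1)

/-- The 8×8 block matrix `P∓(a,b) = [[0, P₊(b)], [P₋(a), 0]]`. -/
def Pmp (a b : CV3) (X : C8) : C8 := (Pplus b X.2, Pminus a X.1)

/-- The block diagonal matrix `diag(λ₁ I₄, λ₂ I₄)`. -/
def diag8 (l1 l2 : ℂ) (X : C8) : C8 := (l1 • X.1, l2 • X.2)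

/-- The vector `D f = -i ∇f`. -/
def Dg (f : V3 → ℂ) (x : V3) : CV3 := fun i => -Complex.I * pd i f x

/-- `D · v = -i ∇ · v`. -/
def Ddiv (v : V3 → CV3) (x : V3) : ℂ := ∑ i, -Complex.I * pd i (fun y => v y i) x

/-- The curl `∇ ∧ v` of a complex vector field on `ℝ³`. -/
def curl3 (v : V3 → CV3) (x : V3) : CV3 :=
  ![pd 1 (fun y => v y 2) x - pd 2 (fun y => v y 1) x,
    pd 2 (fun y => v y 0) x - pd 0 (fun y => v y 2) x,
    pd 0 (fun y => v y 1) x - pd 1 (fun y => v y 0) x]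

/-- `D ∧ v = -i ∇ ∧ v`. -/
def Dcurl (v : V3 → CV3) (x : V3) : CV3 := fun i => -Complex.I * curl3 v x i

/-- The first order operator `P₊(D)`. -/
def PplusD (u : V3 → C4) (x : V3) : C4 :=
  mk4 (Ddiv (fun y => vec4 (u y)) x)
    (fun i => Dg (fun y => u y 0) x i + Dcurl (fun y => vec4 (u y)) x i)

/-- The first order operator `P₋(D)`. -/
def PminusD (u : V3 → C4) (x : V3) : C4 :=
  mk4 (Ddiv (fun y => vec4 (u y)) x)
    (fun i => Dg (fun y => u y 0) x i - Dcurl (fun y => vec4 (u y)) x i)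

/-- The Dirac type operator `P̃(D) = [[0, P₋(D)], [P₊(D), 0]]`. -/
def PtildeD (Z : V3 → C8) (x : V3) : C8 :=
  (PminusD (fun y => (Z y).2) x, PplusD (fun y => (Z y).1) x)

/-- The Laplacian of a complex valued function. -/
def lapC (f : V3 → ℂ) (x : V3) : ℂ := ∑ i, pd i (fun y => pd i f y) x

/-- Componentwise Laplacian of an 8-vector field. -/
def lap8 (Z : V3 → C8) (x : V3) : C8 :=
  (fun j => lapC (fun y => (Z y).1 j) x, fun j => lapC (fun y => (Z y).2 j) x)

/-- Componentwise partial derivative of an 8-vector field. -/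
def pd8 (i : Fin 3) (Z : V3 → C8) (x : V3) : C8 :=
  (fun j => pd i (fun y => (Z y).1 j) x, fun j => pd i (fun y => (Z y).2 j) x)

/-- The Hessian `∇²f` applied to a complex vector: `(∇²f · v)_j = ∑_k ∂_j∂_k f v_k`. -/
def hessC (f : V3 → ℂ) (x : V3) (v : CV3) : CV3 :=
  fun i => ∑ j, pd i (fun y => pd j f y) x * v j

/-- The rescaled potential `W_{μ,γ} = κ I₈ + (1/2) P∓(Dβ, Dα)`. -/
def Wpot (kap al be : V3 → ℂ) (x : V3) (X : C8) : C8 :=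
  kap x • X + (1/2 : ℂ) • Pmp (Dg be x) (Dg al x) X

/-- The transposed potential `W_{μ,γ}ᵗ = κ I₈ + (1/2) P∓(Dα, Dβ)` (i.e. `W_{γ,μ}`). -/
def WpotT (kap al be : V3 → ℂ) (x : V3) (X : C8) : C8 :=
  kap x • X + (1/2 : ℂ) • Pmp (Dg al x) (Dg be x) X

/-- The augmented Maxwell potential
`V_{μ,γ} = ω diag(μ I₄, γ I₄) + (1/2)(P∓(Dβ,Dα) + P̃(Dβ,Dα))`. -/
def Vpot (om : ℝ) (mu ga al be : V3 → ℂ) (x : V3) (X : C8) : C8 :=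
  diag8 ((om : ℂ) * mu x) ((om : ℂ) * ga x) X +
    (1/2 : ℂ) • (Pmp (Dg be x) (Dg al x) X + Ptilde (Dg be x) (Dg al x) X)

theorem pd_mul {f g : V3 → ℂ} {x : V3} (hf : DifferentiableAt ℝ f x)
    (hg : DifferentiableAt ℝ g x) (i : Fin 3) :
    pd i (fun y => f y * g y) x = f x * pd i g x + pd i f x * g x := by
  simp [pd, fderiv_fun_mul hf hg, mul_comm]

theorem PplusD_smul {f : V3 → ℂ} {u : V3 → C4} {x : V3} (hf : DifferentiableAt ℝ f x)
    (hu : DifferentiableAt ℝ u x) :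
    PplusD (fun y => f y • u y) x = f x • PplusD u x + Pplus (Dg f x) (u x) := by
  have h : ∀ j i, pd i (fun y => f y * u y j) x
      = f x * pd i (fun y => u y j) x + pd i f x * u x j :=
    fun j i => pd_mul hf (differentiableAt_pi.1 hu j) i
  ext j
  fin_cases j <;>
    simp [PplusD, Pplus, mk4, vec4, Ddiv, Dg, Dcurl, curl3, dotC, crossC, Fin.sum_univ_three, h] <;>
    ring

theorem PminusD_smul {f : V3 → ℂ} {u : V3 → C4} {x : V3} (hf : DifferentiableAt ℝ f x)
    (hu : DifferentiableAt ℝ u x) :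
    PminusD (fun y => f y • u y) x = f x • PminusD u x + Pminus (Dg f x) (u x) := by
  have h : ∀ j i, pd i (fun y => f y * u y j) x
      = f x * pd i (fun y => u y j) x + pd i f x * u x j :=
    fun j i => pd_mul hf (differentiableAt_pi.1 hu j) i
  ext j
  fin_cases j <;>
    simp [PminusD, Pminus, mk4, vec4, Ddiv, Dg, Dcurl, curl3, dotC, crossC, Fin.sum_univ_three,
      h] <;>
    ring

theorem Pplus_smul_left (c : ℂ) (a : CV3) (u : C4) : Pplus (c • a) u = c • Pplus a u := by
  ext j
  fin_cases j <;> simp [Pplus, mk4, vec4, dotC, crossC, Fin.sum_univ_three] <;> ring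

theorem Pminus_smul_left (c : ℂ) (a : CV3) (u : C4) : Pminus (c • a) u = c • Pminus a u := by
  ext j
  fin_cases j <;> simp [Pminus, mk4, vec4, dotC, crossC, Fin.sum_univ_three] <;> ring

theorem Pplus_smul_right (c : ℂ) (a : CV3) (u : C4) : Pplus a (c • u) = c • Pplus a u := by
  ext j
  fin_cases j <;> simp [Pplus, mk4, vec4, dotC, crossC, Fin.sum_univ_three] <;> ring

theorem Pminus_smul_right (c : ℂ) (a : CV3) (u : C4) : Pminus a (c • u) = c • Pminus a u := by
  ext j
  fin_cases j <;> simp [Pminus, mk4, vec4, dotC, crossC, Fin.sum_univ_three] <;> ring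

/-- Logarithmic differentiation: differentiating `s ^ 2 = exp b` and cancelling the nonzero
factor `2 s` gives `Ds = (1/2) s Db`. -/
theorem Dg_of_sq_eq_exp {s b : V3 → ℂ} {x : V3} (hs : DifferentiableAt ℝ s x)
    (hb : DifferentiableAt ℝ b x) (h : ∀ᶠ y in 𝓝 x, s y ^ 2 = Complex.exp (b y)) :
    Dg s x = (1 / 2 * s x) • Dg b x := by
  have hx : s x ^ 2 = Complex.exp (b x) := h.self_of_nhds
  have hs0 : s x ≠ 0 := by
    intro h0
    rw [h0] at hx
    exact Complex.exp_ne_zero (b x) (by simpa using hx.symm)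
  have hd : HasFDerivAt (fun y => s y * s y) (Complex.exp (b x) • fderiv ℝ b x) x :=
    hb.hasFDerivAt.cexp.congr_of_eventuallyEq
      (h.mono fun y hy => by simpa [sq] using hy)
  have he := (hs.hasFDerivAt.mul hs.hasFDerivAt).unique hd
  ext i
  have hi := DFunLike.congr_fun he (Pi.single i 1)
  simp only [_root_.add_apply, _root_.smul_apply, smul_eq_mul,
    ← hx] at hi
  have hi' : fderiv ℝ s x (Pi.single i 1) = 1 / 2 * s x * fderiv ℝ b x (Pi.single i 1) := by
    apply mul_left_cancel₀ hs0
    linear_combination hi / 2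
  simp only [Dg, pd, Pi.smul_apply, smul_eq_mul, hi']
  ring

theorem Dg_neg (b : V3 → ℂ) (x : V3) : Dg (fun y => -b y) x = (-1 : ℂ) • Dg b x := by
  ext i
  simp [Dg, pd]

/-- The inverse square root is a square root of `exp (-b)`, whence the sign. -/
theorem Dg_inv_of_sq_eq_exp {s b : V3 → ℂ} {x : V3} (hs : DifferentiableAt ℝ s x)
    (hb : DifferentiableAt ℝ b x) (hs0 : s x ≠ 0)
    (h : ∀ᶠ y in 𝓝 x, s y ^ 2 = Complex.exp (b y)) :
    Dg (fun y => (s y)⁻¹) x = (-(1 / 2) * (s x)⁻¹) • Dg b x := by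
  rw [Dg_of_sq_eq_exp (b := fun y => -b y) (hs.fun_inv hs0) hb.fun_neg
    (h.mono fun y hy => by rw [inv_pow, hy, Complex.exp_neg]), Dg_neg, smul_smul]
  congr 1
  ring

/-- the conjugation identity
`P̃(D)(diag(μ^{-1/2} I₄, γ^{-1/2} I₄) Y) = diag(γ^{-1/2} I₄, μ^{-1/2} I₄)[P̃(D) - (1/2)P̃(Dβ,Dα)] Y`,
and consequently, with `Y = diag(μ^{1/2} I₄, γ^{1/2} I₄) X`,
`(P̃(D) + V_{μ,γ}) X = diag(γ^{-1/2} I₄, μ^{-1/2} I₄)(P̃(D) + W_{μ,γ}) Y`; in particular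
`(P̃(D) + V_{μ,γ}) X = 0` in `U` iff `(P̃(D) + W_{μ,γ}) Y = 0` in `U`. -/
theorem rescaling_conjugation_identity
    (U : Set V3) (hU : IsOpen U) (om : ℝ) (hom : 0 < om)
    (mu ga al be : V3 → ℂ) (smu sga : V3 → ℂ)
    (hmu : ContDiffOn ℝ 1 mu U) (hga : ContDiffOn ℝ 1 ga U)
    (hmu0 : ∀ x ∈ U, mu x ≠ 0) (hga0 : ∀ x ∈ U, ga x ≠ 0)
    -- chosen logarithms `α = log γ`, `β = log μ` and square roots `μ^{1/2}`, `γ^{1/2}`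
    (hal : ContDiffOn ℝ 1 al U) (hbe : ContDiffOn ℝ 1 be U)
    (heal : ∀ x ∈ U, Complex.exp (al x) = ga x) (hebe : ∀ x ∈ U, Complex.exp (be x) = mu x)
    (hsmu : ContDiffOn ℝ 1 smu U) (hsga : ContDiffOn ℝ 1 sga U)
    (hsmusq : ∀ x ∈ U, smu x ^ 2 = mu x) (hsgasq : ∀ x ∈ U, sga x ^ 2 = ga x)
    (X : V3 → C8)
    (hX1 : ContDiffOn ℝ 1 (fun y => (X y).1) U) (hX2 : ContDiffOn ℝ 1 (fun y => (X y).2) U) :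
    -- (1) the conjugation identity, for any `C¹` 8-vector field `Y`
    (∀ Y : V3 → C8, ContDiffOn ℝ 1 (fun y => (Y y).1) U →
      ContDiffOn ℝ 1 (fun y => (Y y).2) U → ∀ x ∈ U,
      PtildeD (fun y => ((smu y)⁻¹ • (Y y).1, (sga y)⁻¹ • (Y y).2)) x
        = ((sga x)⁻¹ • (PtildeD Y x - (1/2 : ℂ) • Ptilde (Dg be x) (Dg al x) (Y x)).1,
           (smu x)⁻¹ • (PtildeD Y x - (1/2 : ℂ) • Ptilde (Dg be x) (Dg al x) (Y x)).2)) ∧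
    -- (2) with `Y = diag(μ^{1/2} I₄, γ^{1/2} I₄) X`:
    (∀ x ∈ U,
      PtildeD X x + Vpot om mu ga al be x (X x)
        = ((sga x)⁻¹ • (PtildeD (fun y => (smu y • (X y).1, sga y • (X y).2)) x
            + Wpot (fun y => (om : ℂ) * sga y * smu y) al be x
                (smu x • (X x).1, sga x • (X x).2)).1,
           (smu x)⁻¹ • (PtildeD (fun y => (smu y • (X y).1, sga y • (X y).2)) x
            + Wpot (fun y => (om : ℂ) * sga y * smu y) al be x
                (smu x • (X x).1, sga x • (X x).2)).2)) ∧
    -- (3) the equivalence of the two systems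
    ((∀ x ∈ U, PtildeD X x + Vpot om mu ga al be x (X x) = 0) ↔
      (∀ x ∈ U, PtildeD (fun y => (smu y • (X y).1, sga y • (X y).2)) x
        + Wpot (fun y => (om : ℂ) * sga y * smu y) al be x
            (smu x • (X x).1, sga x • (X x).2) = 0)) := by
  have dU : ∀ {E : Type} [NormedAddCommGroup E] [NormedSpace ℝ E] {f : V3 → E},
      ContDiffOn ℝ 1 f U → ∀ x ∈ U, DifferentiableAt ℝ f x := fun hf x hx =>
    (hf.differentiableOn one_ne_zero).differentiableAt (hU.mem_nhds hx)
  have hsmu0 : ∀ x ∈ U, smu x ≠ 0 := fun x hx h0 =>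
    hmu0 x hx (by rw [← hsmusq x hx, h0]; simp)
  have hsga0 : ∀ x ∈ U, sga x ≠ 0 := fun x hx h0 =>
    hga0 x hx (by rw [← hsgasq x hx, h0]; simp)
  have hemu : ∀ x ∈ U, ∀ᶠ y in 𝓝 x, smu y ^ 2 = Complex.exp (be y) := fun x hx =>
    Filter.eventually_of_mem (hU.mem_nhds hx) fun y hy => by rw [hsmusq y hy, hebe y hy]
  have hega : ∀ x ∈ U, ∀ᶠ y in 𝓝 x, sga y ^ 2 = Complex.exp (al y) := fun x hx =>
    Filter.eventually_of_mem (hU.mem_nhds hx) fun y hy => by rw [hsgasq y hy, heal y hy]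
  have key : ∀ x ∈ U,
      PtildeD X x + Vpot om mu ga al be x (X x)
        = ((sga x)⁻¹ • (PtildeD (fun y => (smu y • (X y).1, sga y • (X y).2)) x
            + Wpot (fun y => (om : ℂ) * sga y * smu y) al be x
                (smu x • (X x).1, sga x • (X x).2)).1,
           (smu x)⁻¹ • (PtildeD (fun y => (smu y • (X y).1, sga y • (X y).2)) x
            + Wpot (fun y => (om : ℂ) * sga y * smu y) al be x
                (smu x • (X x).1, sga x • (X x).2)).2) := by
    intro x hx
    have h1 := hsmu0 x hx
    have h2 := hsga0 x hx
    refine Prod.ext ?_ ?_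
    · simp only [PtildeD, Vpot, Wpot, Pmp, Ptilde, diag8, Prod.fst_add, Prod.smul_fst,
        PminusD_smul (dU hsga x hx) (dU hX2 x hx),
        Dg_of_sq_eq_exp (dU hsga x hx) (dU hal x hx) (hega x hx),
        Pminus_smul_left, Pplus_smul_right, ← hsmusq x hx]
      ext j
      simp only [Pi.add_apply, Pi.smul_apply, smul_eq_mul]
      field_simp
      ring
    · simp only [PtildeD, Vpot, Wpot, Pmp, Ptilde, diag8, Prod.snd_add, Prod.smul_snd,
        PplusD_smul (dU hsmu x hx) (dU hX1 x hx),
        Dg_of_sq_eq_exp (dU hsmu x hx) (dU hbe x hx) (hemu x hx),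
        Pplus_smul_left, Pminus_smul_right, ← hsgasq x hx]
      ext j
      simp only [Pi.add_apply, Pi.smul_apply, smul_eq_mul]
      field_simp
      ring
  refine ⟨?_, key, ?_⟩
  · intro Y hY1 hY2 x hx
    have h1 := hsmu0 x hx
    have h2 := hsga0 x hx
    refine Prod.ext ?_ ?_
    · simp only [PtildeD, Ptilde, Prod.fst_sub, Prod.smul_fst,
        PminusD_smul ((dU hsga x hx).fun_inv h2) (dU hY2 x hx),
        Dg_inv_of_sq_eq_exp (dU hsga x hx) (dU hal x hx) h2 (hega x hx), Pminus_smul_left]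
      module
    · simp only [PtildeD, Ptilde, Prod.snd_sub, Prod.smul_snd,
        PplusD_smul ((dU hsmu x hx).fun_inv h1) (dU hY1 x hx),
        Dg_inv_of_sq_eq_exp (dU hsmu x hx) (dU hbe x hx) h1 (hemu x hx), Pplus_smul_left]
      module
  · refine forall₂_congr fun x hx => ?_
    rw [key x hx]
    rw [Prod.mk_eq_zero, smul_eq_zero_iff_right (inv_ne_zero (hsga0 x hx)),
      smul_eq_zero_iff_right (inv_ne_zero (hsmu0 x hx)), Prod.ext_iff]
    rfl


end
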